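/- arXiv:2003.05876 — 2 statements merged into one kernel-verified Lean document; each statement's English description precedes it below -/
import Mathlib

section
/- For every integer N ≥ 1, the matrix identity H_AO·Q_AO = Q_AO·J holds, i.e. the transition matrix Q_AO intertwines the exceptional-point anharmonic-oscillator Hamiltonian H_AO with the nilpotent Jordan block J. -/
/-!
The three factors of `Q_AO = C·P·F` are peeled off one at a time. Conjugation by `C` turns `H_AO`
into the integer matrix `H'` (`rescaledHAO`) with diagonal `2k - (N-1)`, superdiagonal `N-1-k` and
subdiagonal `-(k+1)`. Next `H'·P = P·W`, where `W` (`rescaledJmat`) is the weighted shift with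
superdiagonal `-(N-1-q)`: row `k` of `P` is the coefficient list of `(1+X)^a` with `a = N-1-k`, and
`(k-a)(1+X)^a + a(1+X)^(a-1) - k(1+X)^(a+1) = -X·((N-1) - X·d/dX)(1+X)^a`.
Finally `F` rescales `W` to the Jordan block `J`, because consecutive diagonal entries of `F` have
ratio `-(N-1-q)`.
-/

open Matrix Polynomial Finset

/-- off-diagonal coupling `√((N−1−k)(k+1))`. -/
noncomputable def gCoup (N k : ℕ) : ℝ := Real.sqrt (((N - 1 - k) * (k + 1) : ℕ))

/-- the non-Hermitian Bose–Hubbard Hamiltonian `H_BH(z)`. -/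
noncomputable def HBH (N : ℕ) (z : ℂ) : Matrix (Fin N) (Fin N) ℂ :=
  fun k l =>
    if (k : ℕ) = (l : ℕ) then -Complex.I * (((N : ℤ) - 1 - 2 * (k : ℕ) : ℤ) : ℂ) * z
    else if (l : ℕ) = (k : ℕ) + 1 then (gCoup N k : ℂ)
    else if (k : ℕ) = (l : ℕ) + 1 then (gCoup N l : ℂ)
    else 0

/-- the EP limit of the discrete anharmonic-oscillator Hamiltonian `H_AO`. -/
noncomputable def HAO (N : ℕ) : Matrix (Fin N) (Fin N) ℂ :=
  fun k l =>
    if (k : ℕ) = (l : ℕ) then -(((N : ℤ) - 1 - 2 * (k : ℕ) : ℤ) : ℂ)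
    else if (l : ℕ) = (k : ℕ) + 1 then (gCoup N k : ℂ)
    else if (k : ℕ) = (l : ℕ) + 1 then -(gCoup N l : ℂ)
    else 0

/-- the nilpotent Jordan block `J`. -/
noncomputable def Jmat (N : ℕ) : Matrix (Fin N) (Fin N) ℂ :=
  fun k l => if (l : ℕ) = (k : ℕ) + 1 then 1 else 0

/-- the Pascal-triangle matrix `P`. -/
noncomputable def Pmat (N : ℕ) : Matrix (Fin N) (Fin N) ℂ :=
  fun m q => ((N - 1 - (m : ℕ)).choose (q : ℕ) : ℂ)

/-- the diagonal factor `D` with `D_{k,k} = i^k·√(binom(N−1,k))`. -/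
noncomputable def Dmat (N : ℕ) : Matrix (Fin N) (Fin N) ℂ :=
  Matrix.diagonal fun k => Complex.I ^ (k : ℕ) * (Real.sqrt ((N - 1).choose (k : ℕ)) : ℂ)

/-- the diagonal factor `G` with `G_{k,k} = (−i)^{N−1−k}·(N−1−k)!`. -/
noncomputable def Gmat (N : ℕ) : Matrix (Fin N) (Fin N) ℂ :=
  Matrix.diagonal fun k => (-Complex.I) ^ (N - 1 - (k : ℕ)) * ((N - 1 - (k : ℕ)).factorial : ℂ)

/-- the Bose–Hubbard transition matrix `Q_BH = D·P·G`. -/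
noncomputable def QBH (N : ℕ) : Matrix (Fin N) (Fin N) ℂ := Dmat N * Pmat N * Gmat N

/-- the diagonal factor `C` with `C_{k,k} = √(binom(N−1,k))`. -/
noncomputable def Cmat (N : ℕ) : Matrix (Fin N) (Fin N) ℂ :=
  Matrix.diagonal fun k => (Real.sqrt ((N - 1).choose (k : ℕ)) : ℂ)

/-- the diagonal factor `F` with `F_{k,k} = (−1)^{N−1−k}·(N−1−k)!`. -/
noncomputable def Fmat (N : ℕ) : Matrix (Fin N) (Fin N) ℂ :=
  Matrix.diagonal fun k => (-1 : ℂ) ^ (N - 1 - (k : ℕ)) * ((N - 1 - (k : ℕ)).factorial : ℂ)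

/-- the anharmonic-oscillator transition matrix `Q_AO = C·P·F`. -/
noncomputable def QAO (N : ℕ) : Matrix (Fin N) (Fin N) ℂ := Cmat N * Pmat N * Fmat N

/-- `β = −1 + i`. -/
noncomputable def betaC : ℂ := -1 + Complex.I

/-- the diagonal factor `B` with `B_{k,k} = (−β)^{−k}`. -/
noncomputable def Bmat (N : ℕ) : Matrix (Fin N) (Fin N) ℂ :=
  Matrix.diagonal fun k => ((-betaC) ^ (k : ℕ))⁻¹

/-- the diagonal factor `A` with `A_{k,k} = β^k`. -/
noncomputable def Amat (N : ℕ) : Matrix (Fin N) (Fin N) ℂ :=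
  Matrix.diagonal fun k => betaC ^ (k : ℕ)

/-- the upper-triangular real matrix `R` with
`R_{n,n+q} = √(binom(n+q,n)·binom(N−1−n,q))`. -/
noncomputable def Rmat (N : ℕ) : Matrix (Fin N) (Fin N) ℂ :=
  fun n k =>
    if (n : ℕ) ≤ (k : ℕ) then
      (Real.sqrt (((k : ℕ).choose (n : ℕ)) * ((N - 1 - (n : ℕ)).choose ((k : ℕ) - (n : ℕ)))) : ℂ)
    else 0

/-- the transition-matrix product `S = B·R·A`. -/
noncomputable def Smat (N : ℕ) : Matrix (Fin N) (Fin N) ℂ := Bmat N * Rmat N * Amat N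

/-- the discrete anharmonic-oscillator Hamiltonian `H_AO(γ)` with coupling parameter `γ`. -/
noncomputable def HAOg (N : ℕ) (γ : ℝ) : Matrix (Fin N) (Fin N) ℝ :=
  fun k l =>
    if (k : ℕ) = (l : ℕ) then -((N : ℝ) - 1 - 2 * (k : ℕ))
    else if (l : ℕ) = (k : ℕ) + 1 then
      Real.sqrt ((((N - 1 - (k : ℕ)) * ((k : ℕ) + 1) : ℕ)) * (1 - γ))
    else if (k : ℕ) = (l : ℕ) + 1 then
      -Real.sqrt ((((N - 1 - (l : ℕ)) * ((l : ℕ) + 1) : ℕ)) * (1 - γ))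
    else 0

/-- the exchange (parity) matrix `Π`. -/
noncomputable def PiMat (N : ℕ) : Matrix (Fin N) (Fin N) ℂ :=
  fun k l => if (k : ℕ) + (l : ℕ) = N - 1 then 1 else 0

section Superdiagonal

variable {R : Type*} {N : ℕ}

/-- The weighted shift with entry `w k` at position `(k, k + 1)`, so that `Jmat` is the case of
constant weight `1`. The weights are indexed by `ℕ`; only those with `k + 1 < N` occur. -/
def superdiagonal [Zero R] (N : ℕ) (w : ℕ → R) : Matrix (Fin N) (Fin N) R :=
  Matrix.of fun k l => if (l : ℕ) = k + 1 then w k else 0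

theorem superdiagonal_mul_apply [NonUnitalNonAssocSemiring R] {n : Type*} (w : ℕ → R)
    (A : Matrix (Fin N) n R) (k : Fin N) (q : n) :
    (superdiagonal N w * A) k q = if h : (k : ℕ) + 1 < N then w k * A ⟨k + 1, h⟩ q else 0 := by
  rw [Matrix.mul_apply]
  split_ifs with h
  · rw [Fintype.sum_eq_single ⟨k + 1, h⟩ fun l hl => ?_]
    · simp [superdiagonal]
    · simp [superdiagonal, Fin.val_ne_iff.2 hl]
  · exact sum_eq_zero fun l _ => by simp [superdiagonal, show (l : ℕ) ≠ k + 1 by lia]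

theorem mul_superdiagonal_apply [NonUnitalNonAssocSemiring R] {m : Type*} (w : ℕ → R)
    (A : Matrix m (Fin N) R) (p : m) (k : Fin N) :
    (A * superdiagonal N w) p k =
      if (k : ℕ) = 0 then 0 else A p ⟨k - 1, by lia⟩ * w (k - 1) := by
  rw [Matrix.mul_apply]
  split_ifs with h
  · exact sum_eq_zero fun l _ => by simp [superdiagonal, h]
  · rw [Fintype.sum_eq_single ⟨k - 1, by lia⟩ fun l hl => ?_]
    · have : (k : ℕ) - 1 + 1 = k := by lia
      simp [superdiagonal, this]
    · have : (k : ℕ) ≠ l + 1 := fun hkl => hl (Fin.ext (by simp [hkl]))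
      simp [superdiagonal, this]

theorem superdiagonal_transpose_mul_apply [NonUnitalCommSemiring R] {n : Type*} (w : ℕ → R)
    (A : Matrix (Fin N) n R) (k : Fin N) (q : n) :
    ((superdiagonal N w)ᵀ * A) k q =
      if (k : ℕ) = 0 then 0 else w (k - 1) * A ⟨k - 1, by lia⟩ q := by
  rw [← Matrix.transpose_apply (_ * A), Matrix.transpose_mul, Matrix.transpose_transpose,
    mul_superdiagonal_apply]
  simp only [Matrix.transpose_apply, mul_comm]

theorem superdiagonal_mul_diagonal_eq_diagonal_mul [NonUnitalNonAssocSemiring R] {u v d : ℕ → R}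
    (h : ∀ k, k + 1 < N → u k * d (k + 1) = d k * v k) :
    superdiagonal N u * diagonal (fun k : Fin N => d k) =
      diagonal (fun k : Fin N => d k) * superdiagonal N v := by
  ext k l
  rw [mul_diagonal, diagonal_mul]
  by_cases hl : (l : ℕ) = k + 1
  · simpa [superdiagonal, hl] using h k (hl ▸ l.isLt)
  · simp [superdiagonal, hl]

theorem superdiagonal_transpose_mul_diagonal_eq_diagonal_mul [NonUnitalCommSemiring R]
    {u v d : ℕ → R} (h : ∀ k, k + 1 < N → u k * d k = d (k + 1) * v k) :
    (superdiagonal N u)ᵀ * diagonal (fun k : Fin N => d k) =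
      diagonal (fun k : Fin N => d k) * (superdiagonal N v)ᵀ := by
  have := superdiagonal_mul_diagonal_eq_diagonal_mul (N := N) (u := v) (v := u) (d := d)
    fun k hk => by rw [mul_comm, ← h k hk, mul_comm]
  simpa [Matrix.transpose_mul] using congrArg transpose this.symm

end Superdiagonal

section Binomial

variable {R : Type*} [CommRing R]

theorem cast_choose_succ_mul (a q : ℕ) :
    (a.choose (q + 1) : R) * (q + 1) = a.choose q * (a - q) := by
  rcases le_or_gt q a with h | h
  · simpa [Nat.cast_sub h] using congrArg (Nat.cast (R := R)) (Nat.choose_succ_right_eq a q)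
  · simp [Nat.choose_eq_zero_of_lt h, Nat.choose_eq_zero_of_lt (h.trans q.lt_succ_self)]

theorem cast_mul_choose_pred (a q : ℕ) :
    (a : R) * (a - 1).choose q = (a - q) * a.choose q := by
  cases a with
  | zero => cases q <;> simp
  | succ b =>
    rcases le_or_gt q (b + 1) with h | h
    · have := congrArg (Nat.cast (R := R)) (Nat.choose_mul_succ_eq b q)
      push_cast [Nat.cast_sub h] at this ⊢
      linear_combination this
    · simp [Nat.choose_eq_zero_of_lt h, Nat.choose_eq_zero_of_lt (b.lt_succ_self.trans h)]

theorem choose_three_term_recurrence (a m q : ℕ) :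
    ((m : R) - a) * a.choose (q + 1) + a * (a - 1).choose (q + 1) - m * (a + 1).choose (q + 1) =
      -(m + a - q) * a.choose q := by
  rw [cast_mul_choose_pred, Nat.choose_succ_succ' a q]
  push_cast
  linear_combination -cast_choose_succ_mul (R := R) a q

end Binomial

theorem gCoup_mul_sqrt_choose_succ (N k : ℕ) :
    gCoup N k * √((N - 1).choose (k + 1)) = √((N - 1).choose k) * (N - 1 - k : ℕ) := by
  have h : (((N - 1 - k) * (k + 1) : ℕ) : ℝ) * (N - 1).choose (k + 1) =
      (N - 1).choose k * ((N - 1 - k : ℕ) : ℝ) ^ 2 := by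
    norm_cast
    linear_combination (N - 1 - k) * Nat.choose_succ_right_eq (N - 1) k
  rw [gCoup, ← Real.sqrt_mul (Nat.cast_nonneg _), h, Real.sqrt_mul (Nat.cast_nonneg _),
    Real.sqrt_sq (Nat.cast_nonneg _)]

theorem gCoup_mul_sqrt_choose (N k : ℕ) :
    gCoup N k * √((N - 1).choose k) = √((N - 1).choose (k + 1)) * (k + 1) := by
  have h : (((N - 1 - k) * (k + 1) : ℕ) : ℝ) * (N - 1).choose k =
      (N - 1).choose (k + 1) * ((k : ℝ) + 1) ^ 2 := by
    norm_cast
    linear_combination (k + 1) * (Nat.choose_succ_right_eq (N - 1) k).symm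
  rw [gCoup, ← Real.sqrt_mul (Nat.cast_nonneg _), h, Real.sqrt_mul (Nat.cast_nonneg _),
    Real.sqrt_sq (by positivity)]

/-- The anharmonic-oscillator Hamiltonian in the basis rescaled by `C`, that is `C⁻¹·H_AO·C`: the
rescaling removes the square roots. -/
noncomputable def rescaledHAO (N : ℕ) : Matrix (Fin N) (Fin N) ℂ :=
  diagonal (fun k : Fin N => 2 * (k : ℂ) - (N - 1)) +
    superdiagonal N (fun k => ((N - 1 - k : ℕ) : ℂ)) - (superdiagonal N fun k => (k : ℂ) + 1)ᵀ

/-- The Jordan block in the basis rescaled by `F`, that is `F·J·F⁻¹`. -/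
noncomputable def rescaledJmat (N : ℕ) : Matrix (Fin N) (Fin N) ℂ :=
  superdiagonal N fun q => -((N - 1 - q : ℕ) : ℂ)

theorem HAO_eq_superdiagonal (N : ℕ) :
    HAO N = diagonal (fun k : Fin N => 2 * (k : ℂ) - (N - 1)) +
      superdiagonal N (fun k => (gCoup N k : ℂ)) - (superdiagonal N fun k => (gCoup N k : ℂ))ᵀ := by
  ext k l
  rcases eq_or_ne k l with rfl | hkl
  · simp [HAO, superdiagonal]
  · have := Fin.val_ne_iff.2 hkl
    simp only [HAO, superdiagonal, Matrix.sub_apply, Matrix.add_apply, diagonal_apply_ne _ hkl,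
      Matrix.transpose_apply, Matrix.of_apply]
    split_ifs <;> first | lia | simp

theorem HAO_mul_Cmat (N : ℕ) : HAO N * Cmat N = Cmat N * rescaledHAO N := by
  have hsuper := superdiagonal_mul_diagonal_eq_diagonal_mul (N := N)
    (u := fun k => (gCoup N k : ℂ)) (v := fun k => ((N - 1 - k : ℕ) : ℂ))
    (d := fun k => (√((N - 1).choose k) : ℂ)) fun k _ => by
      exact_mod_cast gCoup_mul_sqrt_choose_succ N k
  have hsub := superdiagonal_transpose_mul_diagonal_eq_diagonal_mul (N := N)
    (u := fun k => (gCoup N k : ℂ)) (v := fun k => (k : ℂ) + 1)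
    (d := fun k => (√((N - 1).choose k) : ℂ)) fun k _ => by
      exact_mod_cast gCoup_mul_sqrt_choose N k
  rw [HAO_eq_superdiagonal, rescaledHAO, Cmat, Matrix.sub_mul, Matrix.add_mul, hsuper, hsub,
    Matrix.mul_sub, Matrix.mul_add, (commute_diagonal _ _).eq]

theorem rescaledHAO_mul_Pmat_apply (N : ℕ) (k q : Fin N) :
    (rescaledHAO N * Pmat N) k q =
      ((k : ℂ) - (N - 1 - k : ℕ)) * (N - 1 - k).choose q +
        (N - 1 - k : ℕ) * (N - 1 - k - 1).choose q - k * (N - 1 - k + 1).choose q := by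
  have hdiag : 2 * (k : ℂ) - (N - 1) = k - (N - 1 - k : ℕ) := by
    rw [Nat.cast_sub (Nat.le_sub_one_of_lt k.isLt), Nat.cast_pred k.pos]
    ring
  have hsuper : (superdiagonal N (fun k => ((N - 1 - k : ℕ) : ℂ)) * Pmat N) k q =
      (N - 1 - k : ℕ) * (N - 1 - k - 1).choose q := by
    rw [superdiagonal_mul_apply]
    split_ifs with h
    · rw [Pmat, Nat.sub_sub _ _ 1]
    · simp [show N - 1 - (k : ℕ) = 0 by lia]
  have hsub : ((superdiagonal N fun k => (k : ℂ) + 1)ᵀ * Pmat N) k q =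
      k * (N - 1 - k + 1).choose q := by
    rw [superdiagonal_transpose_mul_apply]
    split_ifs with h
    · simp [h]
    · rw [Pmat, Nat.cast_pred (by lia), sub_add_cancel,
        show N - 1 - ((k : ℕ) - 1) = N - 1 - k + 1 by lia]
  rw [rescaledHAO, Matrix.sub_mul, Matrix.add_mul, Matrix.sub_apply, Matrix.add_apply,
    diagonal_mul, hdiag, hsuper, hsub, Pmat]

theorem rescaledHAO_mul_Pmat (N : ℕ) : rescaledHAO N * Pmat N = Pmat N * rescaledJmat N := by
  ext k ⟨q, hq⟩
  rw [rescaledHAO_mul_Pmat_apply, rescaledJmat, mul_superdiagonal_apply]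
  cases q with
  | zero => simp
  | succ q =>
    have hweight : ((N - 1 - q : ℕ) : ℂ) = k + (N - 1 - k : ℕ) - q := by
      rw [← Nat.cast_add, ← Nat.cast_sub (by lia)]
      congr 1
      lia
    simp only [choose_three_term_recurrence, Nat.add_one_ne_zero, if_false, Nat.add_sub_cancel,
      Pmat, hweight, mul_comm]

theorem Jmat_eq_superdiagonal (N : ℕ) : Jmat N = superdiagonal N fun _ => 1 := rfl

theorem rescaledJmat_mul_Fmat (N : ℕ) : rescaledJmat N * Fmat N = Fmat N * Jmat N := by
  rw [rescaledJmat, Jmat_eq_superdiagonal, Fmat]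
  refine superdiagonal_mul_diagonal_eq_diagonal_mul
    (d := fun k => (-1 : ℂ) ^ (N - 1 - k) * ((N - 1 - k).factorial : ℂ)) fun q hq => ?_
  obtain ⟨r, hr⟩ : ∃ r, N - 1 - q = r + 1 := ⟨N - 1 - q - 1, by lia⟩
  rw [← Nat.sub_sub, hr, Nat.add_sub_cancel, Nat.factorial_succ, pow_succ]
  push_cast
  ring

/-- `H_AO·Q_AO = Q_AO·J`. -/
theorem ao_intertwining (N : ℕ) (hN : 1 ≤ N) :
    HAO N * QAO N = QAO N * Jmat N := by
  calc HAO N * QAO N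
      = HAO N * Cmat N * Pmat N * Fmat N := by simp only [QAO, Matrix.mul_assoc]
    _ = Cmat N * (rescaledHAO N * Pmat N) * Fmat N := by
      rw [HAO_mul_Cmat, Matrix.mul_assoc (Cmat N)]
    _ = Cmat N * Pmat N * (rescaledJmat N * Fmat N) := by
      simp only [rescaledHAO_mul_Pmat, Matrix.mul_assoc]
    _ = QAO N * Jmat N := by rw [rescaledJmat_mul_Fmat, QAO, Matrix.mul_assoc _ (Fmat N)]
end

section
/- For every integer N ≥ 1, the identity S·Q_BH = Q_AO holds; equivalently, since Q_BH is invertible, the transition-matrix product Q_AO·Q_BH⁻¹ equals the explicit closed-form matrix S = B·R·A. -/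
/-!
Conjugation by `C` turns the square-root matrix `R` into an integer matrix: by trinomial revision
`R * C = C * U`, where `U` is the Pascal matrix `P` with its columns reversed. The product of two
Pascal matrices with powers of `x` in between is computed by generating functions: reading off the
coefficients of `((X + 1) + x) ^ L = (X + (1 + x)) ^ L` gives
`U * diag (x ^ k) * P * diag ((1 + x) ^ k) = diag (x ^ k * (1 + x) ^ (N - 1 - k)) * P`.
At `x = β * i` one has `1 + x = -i`, and all the diagonal factors of `S * Q_BH` collapse to those of
`Q_AO`. The matrix `U` is also upper unitriangular, so `P`, and with it `Q_BH`, is invertible.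
-/

open Matrix Polynomial Finset

theorem sum_choose_mul_choose_mul_pow {R : Type*} [CommSemiring R] (x : R) (L q : ℕ) :
    ∑ j ∈ range (L + 1), (L.choose j : R) * j.choose q * x ^ (L - j) =
      L.choose q * (1 + x) ^ (L - q) := by
  have expand : (X + C (1 + x)) ^ L =
      ∑ j ∈ range (L + 1), (X + 1) ^ j * C (x ^ (L - j) * (L.choose j : R)) := by
    rw [C_add, C_1, ← add_assoc, add_pow]
    simp only [C_mul, C_pow, C_eq_natCast, mul_assoc]
  have coeff_eq := congrArg (coeff · q) expand
  simp only [coeff_X_add_C_pow, finsetSum_coeff, coeff_mul_C, coeff_X_add_one_pow] at coeff_eq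
  rw [mul_comm, coeff_eq]
  exact sum_congr rfl fun j _ => by ring

theorem sum_choose_mul_choose_mul_pow_of_le {R : Type*} [CommSemiring R] (x : R) {L M : ℕ}
    (hLM : L ≤ M) (q : ℕ) :
    ∑ j ∈ range (M + 1), (L.choose j : R) * j.choose q * x ^ (M - j) =
      x ^ (M - L) * (L.choose q * (1 + x) ^ (L - q)) := by
  have vanish : ∀ j ∈ range (M + 1), j ∉ range (L + 1) →
      (L.choose j : R) * j.choose q * x ^ (M - j) = 0 := fun j _ hj => by
    rw [Nat.choose_eq_zero_of_lt (by simpa [Nat.lt_succ_iff] using hj)]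
    simp
  rw [← sum_subset (range_mono (by lia)) vanish, ← sum_choose_mul_choose_mul_pow, mul_sum]
  refine sum_congr rfl fun j hj => ?_
  rw [show M - j = M - L + (L - j) by have := mem_range.mp hj; lia, pow_add]
  ring

theorem sqrt_choose_mul_sqrt_choose {M k n : ℕ} (hnk : n ≤ k) :
    √((k.choose n : ℝ) * (M - n).choose (k - n)) * √(M.choose k : ℝ) =
      √(M.choose n : ℝ) * (M - n).choose (k - n) := by
  have revision : (M.choose k : ℝ) * k.choose n = M.choose n * (M - n).choose (k - n) := by
    exact_mod_cast Nat.choose_mul hnk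
  rw [← Real.sqrt_mul (by positivity), mul_right_comm, mul_comm (k.choose n : ℝ), revision,
    mul_assoc, Real.sqrt_mul (by positivity), Real.sqrt_mul_self (by positivity)]

/-- The Pascal matrix `P` with its columns reversed. It is the matrix of binomials
`binom(N−1−n, k−n)`, written `binom(N−1−n, N−1−k)` so that the entries below the diagonal vanish
without a case distinction. -/
noncomputable def upperPascal (N : ℕ) : Matrix (Fin N) (Fin N) ℂ :=
  (Pmat N).submatrix id Fin.rev

theorem upperPascal_apply (N : ℕ) (n k : Fin N) :
    upperPascal N n k = (N - 1 - (n : ℕ)).choose (N - 1 - (k : ℕ)) := by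
  simp only [upperPascal, Pmat, submatrix_apply, id_eq, Fin.val_rev]
  congr 2
  lia

theorem det_upperPascal (N : ℕ) : (upperPascal N).det = 1 := by
  have upper : (upperPascal N).IsUpperTriangular := fun n k (hkn : k < n) => by
    rw [upperPascal_apply, Nat.choose_eq_zero_of_lt (by lia), Nat.cast_zero]
  rw [det_of_isUpperTriangular upper]
  exact prod_eq_one fun k _ => by rw [upperPascal_apply, Nat.choose_self, Nat.cast_one]

theorem isUnit_Pmat (N : ℕ) : IsUnit (Pmat N) := by
  have isUnit_upperPascal : IsUnit (upperPascal N) := by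
    rw [isUnit_iff_isUnit_det, det_upperPascal]
    exact isUnit_one
  exact (isUnit_submatrix_equiv (Equiv.refl (Fin N)) Fin.revPerm).mp isUnit_upperPascal

theorem isUnit_Dmat (N : ℕ) : IsUnit (Dmat N) := by
  rw [Dmat, isUnit_diagonal, Pi.isUnit_iff]
  intro k
  have choose_pos : 0 < (N - 1).choose k := Nat.choose_pos (by lia)
  have sqrt_ne_zero : √((N - 1).choose k : ℝ) ≠ 0 := by positivity
  exact (mul_ne_zero (pow_ne_zero _ Complex.I_ne_zero) (mod_cast sqrt_ne_zero)).isUnit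

theorem isUnit_Gmat (N : ℕ) : IsUnit (Gmat N) := by
  rw [Gmat, isUnit_diagonal, Pi.isUnit_iff]
  intro k
  exact (mul_ne_zero (pow_ne_zero _ (neg_ne_zero.mpr Complex.I_ne_zero))
    (mod_cast Nat.factorial_ne_zero _)).isUnit

theorem isUnit_QBH (N : ℕ) : IsUnit (QBH N) :=
  ((isUnit_Dmat N).mul (isUnit_Pmat N)).mul (isUnit_Gmat N)

theorem Rmat_mul_Cmat (N : ℕ) : Rmat N * Cmat N = Cmat N * upperPascal N := by
  ext n k
  rw [Cmat, mul_diagonal, diagonal_mul, upperPascal_apply, Rmat]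
  split_ifs with hnk
  · rw [← Nat.choose_symm (show N - 1 - (k : ℕ) ≤ N - 1 - n by lia),
      show N - 1 - (n : ℕ) - (N - 1 - k) = k - n by lia]
    exact_mod_cast sqrt_choose_mul_sqrt_choose hnk
  · rw [Nat.choose_eq_zero_of_lt (show N - 1 - (n : ℕ) < N - 1 - k by lia), Nat.cast_zero, zero_mul,
      mul_zero]

theorem upperPascal_mul_diagonal_mul_Pmat (N : ℕ) (x : ℂ) :
    upperPascal N * diagonal (fun k : Fin N => x ^ (k : ℕ)) * Pmat N *
        diagonal (fun k : Fin N => (1 + x) ^ (k : ℕ)) =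
      diagonal (fun k : Fin N => x ^ (k : ℕ) * (1 + x) ^ (N - 1 - (k : ℕ))) * Pmat N := by
  ext n q
  have hN : N - 1 + 1 = N := Nat.sub_add_cancel n.pos
  have entry : (upperPascal N * diagonal (fun k : Fin N => x ^ (k : ℕ)) * Pmat N) n q =
      x ^ (n : ℕ) * ((N - 1 - n).choose q * (1 + x) ^ (N - 1 - n - q)) := by
    have reflected := sum_choose_mul_choose_mul_pow_of_le x (Nat.sub_le (N - 1) n) q
    rw [← sum_range_reflect, hN, ← Fin.sum_univ_eq_sum_range
      (fun k => ((N - 1 - n).choose (N - 1 - k) : ℂ) * (N - 1 - k).choose q *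
        x ^ (N - 1 - (N - 1 - k))), Nat.sub_sub_self (by lia)] at reflected
    rw [← reflected, mul_apply]
    refine sum_congr rfl fun k _ => ?_
    rw [mul_diagonal, upperPascal_apply, Nat.sub_sub_self (by lia), Pmat]
    ring
  rw [mul_diagonal, diagonal_mul, entry, Pmat]
  rcases le_or_gt (q : ℕ) (N - 1 - n) with hq | hq
  · rw [← pow_sub_mul_pow (1 + x) hq]
    ring
  · rw [Nat.choose_eq_zero_of_lt hq]
    simp

theorem betaC_ne_zero : betaC ≠ 0 := fun h => by
  simpa [betaC] using congrArg Complex.im h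

theorem one_add_betaC_mul_I : 1 + betaC * Complex.I = -Complex.I := by
  rw [betaC, add_mul, Complex.I_mul_I]
  ring

theorem Amat_mul_Dmat (N : ℕ) :
    Amat N * Dmat N = Cmat N * diagonal fun k : Fin N => (betaC * Complex.I) ^ (k : ℕ) := by
  rw [Amat, Dmat, Cmat, diagonal_mul_diagonal, diagonal_mul_diagonal]
  congr 1
  ext k
  ring

theorem Gmat_eq_smul (N : ℕ) :
    Gmat N = Complex.I ^ (N - 1) •
      ((diagonal fun k : Fin N => (-Complex.I) ^ (k : ℕ)) * Fmat N) := by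
  rw [Gmat, Fmat, diagonal_mul_diagonal, ← diagonal_smul]
  congr 1
  ext k
  have I_mul_neg_I : Complex.I * -Complex.I = 1 := by simp
  have powers : Complex.I ^ (N - 1) * (-Complex.I) ^ (k : ℕ) = Complex.I ^ (N - 1 - k) := by
    rw [← pow_sub_mul_pow Complex.I (show (k : ℕ) ≤ N - 1 by lia), mul_assoc, ← mul_pow,
      I_mul_neg_I, one_pow, mul_one]
  rw [Pi.smul_apply, smul_eq_mul, ← mul_assoc, ← mul_assoc, powers, ← mul_pow, mul_neg_one]

theorem Bmat_mul_diagonal (N : ℕ) :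
    Bmat N * diagonal (fun k : Fin N =>
        (betaC * Complex.I) ^ (k : ℕ) * (-Complex.I) ^ (N - 1 - (k : ℕ))) =
      (-Complex.I) ^ (N - 1) • 1 := by
  rw [Bmat, diagonal_mul_diagonal, smul_one_eq_diagonal]
  congr 1
  ext k
  rw [← neg_mul_neg betaC, mul_pow, mul_assoc,
    inv_mul_cancel_left₀ (pow_ne_zero _ (neg_ne_zero.mpr betaC_ne_zero)), mul_comm]
  exact pow_sub_mul_pow _ (by lia)

theorem Bmat_mul_Cmat (N : ℕ) : Bmat N * Cmat N = Cmat N * Bmat N :=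
  commute_diagonal _ _

theorem Smat_mul_QBH (N : ℕ) : Smat N * QBH N = QAO N := by
  set x := betaC * Complex.I
  set V := diagonal fun k : Fin N => x ^ (k : ℕ)
  set W := diagonal fun k : Fin N => (-Complex.I) ^ (k : ℕ)
  set E := diagonal fun k : Fin N => x ^ (k : ℕ) * (-Complex.I) ^ (N - 1 - (k : ℕ))
  have pascal : upperPascal N * V * Pmat N * W = E * Pmat N := by
    simpa only [x, one_add_betaC_mul_I] using upperPascal_mul_diagonal_mul_Pmat N x
  have phases : Complex.I ^ (N - 1) * (-Complex.I) ^ (N - 1) = 1 := by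
    rw [← mul_pow, mul_neg, Complex.I_mul_I, neg_neg, one_pow]
  calc Smat N * QBH N
      = Bmat N * Rmat N * (Amat N * Dmat N) * Pmat N * Gmat N := by
        simp only [Smat, QBH, Matrix.mul_assoc]
    _ = Complex.I ^ (N - 1) • (Bmat N * (Rmat N * Cmat N) * V * Pmat N * W * Fmat N) := by
        rw [Amat_mul_Dmat, Gmat_eq_smul, Matrix.mul_smul]
        simp only [x, V, W, Matrix.mul_assoc]
    _ = Complex.I ^ (N - 1) •
          (Cmat N * Bmat N * (upperPascal N * V * Pmat N * W) * Fmat N) := by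
        rw [Rmat_mul_Cmat, ← Bmat_mul_Cmat]
        simp only [Matrix.mul_assoc]
    _ = Complex.I ^ (N - 1) • (Cmat N * (Bmat N * E) * Pmat N * Fmat N) := by
        rw [pascal]
        simp only [Matrix.mul_assoc]
    _ = QAO N := by
        rw [Bmat_mul_diagonal, Matrix.mul_smul, Matrix.mul_one, Matrix.smul_mul, Matrix.smul_mul,
          smul_smul, phases, one_smul, QAO]

/-- `S·Q_BH = Q_AO`, equivalently `Q_AO·Q_BH⁻¹ = S`. -/
theorem smat_transition_product (N : ℕ) (hN : 1 ≤ N) :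
    Smat N * QBH N = QAO N ∧ QAO N * (QBH N)⁻¹ = Smat N := by
  have isUnit_det : IsUnit (QBH N).det := (isUnit_iff_isUnit_det _).mp (isUnit_QBH N)
  refine ⟨Smat_mul_QBH N, ?_⟩
  rw [← Smat_mul_QBH, mul_nonsing_inv_cancel_right _ _ isUnit_det]
end
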